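/- Let n ≥ 1, ε ∈ (0,1), δ ∈ (0,1), Δ ≥ 0, and σ : Fin n → ℝ with σ_ℓ > 0 for all ℓ and min_ℓ σ_ℓ ≥ Δ·√(2·ln(1.25/δ))/ε. Let ν be the product measure on ℝⁿ whose ℓ-th factor is gaussianReal 0 (σ_ℓ²). Then for any a, a' ∈ ℝⁿ with ‖a − a'‖₂ ≤ Δ and any measurable set s ⊆ ℝⁿ, the translated measures satisfy (ν mapped by x ↦ a + x)(s) ≤ e^ε · (ν mapped by x ↦ a' + x)(s) + δ. (Multivariate Gaussian mechanism with per-coordinate noise levels: the output distributions on adjacent inputs of L₂-sensitivity Δ are (ε,δ)-indistinguishable.) -/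

import Mathlib

open MeasureTheory ProbabilityTheory Real

lemma gm_half : gaussianReal 0 1 (Set.Ioi 0) ≤ ENNReal.ofReal (1 / 2) := by
  have h1 : gaussianReal 0 1 (Set.Iio 0) = gaussianReal 0 1 (Set.Ioi 0) := by
    have h := gaussianReal_map_neg (μ := 0) (v := 1)
    rw [neg_zero] at h
    conv_lhs => rw [← h]
    rw [Measure.map_apply (by fun_prop) measurableSet_Iio]
    congr 1
    ext x
    simp
  have h2 : gaussianReal 0 1 (Set.Iio 0) + gaussianReal 0 1 (Set.Ioi 0) ≤ 1 := by
    rw [← measure_union _ measurableSet_Ioi]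
    · exact prob_le_one
    · rw [Set.disjoint_left]
      intro x hx hx'
      simp only [Set.mem_Iio, Set.mem_Ioi] at hx hx'
      linarith
  rw [h1] at h2
  rw [← ENNReal.ofReal_toReal (measure_ne_top (gaussianReal 0 1) (Set.Ioi 0))] at h2 ⊢
  rw [← ENNReal.ofReal_add ENNReal.toReal_nonneg ENNReal.toReal_nonneg,
    ENNReal.ofReal_le_one] at h2
  apply ENNReal.ofReal_le_ofReal
  linarith

lemma gm_tail_pos (u : ℝ) (hu : 0 ≤ u) :
    gaussianReal 0 1 (Set.Ioi u) ≤ ENNReal.ofReal (exp (-u ^ 2 / 2) * (1 / 2)) := by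
  have e : gaussianReal 0 1 (Set.Ioi u)
      = ∫⁻ x in Set.Ioi 0, gaussianPDF 0 1 (x + u) := by
    rw [gaussianReal_apply 0 one_ne_zero, ← lintegral_indicator measurableSet_Ioi,
      ← lintegral_indicator measurableSet_Ioi,
      ← lintegral_add_right_eq_self _ u]
    congr 1
    ext x
    simp [Set.indicator]
  rw [e]
  calc ∫⁻ x in Set.Ioi 0, gaussianPDF 0 1 (x + u)
      ≤ ∫⁻ x in Set.Ioi 0, ENNReal.ofReal (exp (-u ^ 2 / 2)) * gaussianPDF 0 1 x := by
        apply setLIntegral_mono (by fun_prop)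
        intro x hx
        rw [gaussianPDF, gaussianPDF, ← ENNReal.ofReal_mul (exp_nonneg _)]
        apply ENNReal.ofReal_le_ofReal
        simp only [gaussianPDFReal, NNReal.coe_one, mul_one, sub_zero]
        rw [mul_left_comm, ← exp_add]
        have : 0 < x := hx
        gcongr
        nlinarith [mul_nonneg this.le hu]
    _ = ENNReal.ofReal (exp (-u ^ 2 / 2)) * gaussianReal 0 1 (Set.Ioi 0) := by
        rw [lintegral_const_mul _ (by fun_prop), gaussianReal_apply 0 one_ne_zero]
    _ ≤ _ := by
        rw [ENNReal.ofReal_mul (exp_nonneg _)]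
        gcongr
        exact gm_half

lemma gm_tail_neg (u : ℝ) (hu : u ≤ 0) :
    gaussianReal 0 1 (Set.Ioi u) ≤ ENNReal.ofReal (-u + 1 / 2) := by
  have e : Set.Ioi u = Set.Ioc u 0 ∪ Set.Ioi 0 := (Set.Ioc_union_Ioi_eq_Ioi hu).symm
  rw [e, ENNReal.ofReal_add (by linarith) (by norm_num)]
  refine (measure_union_le _ _).trans (add_le_add ?_ gm_half)
  rw [gaussianReal_apply 0 one_ne_zero]
  calc ∫⁻ x in Set.Ioc u 0, gaussianPDF 0 1 x ≤ ∫⁻ x in Set.Ioc u 0, 1 := by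
        apply setLIntegral_mono (by fun_prop)
        intro x hx
        rw [gaussianPDF, ENNReal.ofReal_le_one]
        simp only [gaussianPDFReal, NNReal.coe_one, mul_one, sub_zero]
        apply mul_le_one₀
        · apply inv_le_one_of_one_le₀
          rw [Real.one_le_sqrt]
          linarith [pi_gt_three]
        · positivity
        · rw [exp_le_one_iff]
          nlinarith [sq_nonneg x]
    _ = _ := by simp

lemma gm_tail (c δ : ℝ) (hc : 0 < c) (hc2 : 0.4 ≤ c ^ 2) (hδ : δ = 1.25 * exp (-c ^ 2 / 2)) :
    gaussianReal 0 1 (Set.Ioi (c - 1 / (2 * c))) ≤ ENNReal.ofReal δ := by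
  rcases le_total 0 (c - 1 / (2 * c)) with hu | hu
  · refine (gm_tail_pos _ hu).trans (ENNReal.ofReal_le_ofReal ?_)
    have h1 : exp (-(c - 1 / (2 * c)) ^ 2 / 2) ≤ exp (-c ^ 2 / 2) * exp (1 / 2) := by
      rw [← exp_add]
      apply exp_le_exp.2
      have : c * (1 / (2 * c)) = 1 / 2 := by field_simp
      nlinarith [sq_nonneg (1 / (2 * c))]
    have h2 : exp (1 / 2) ≤ 2.5 := by
      have : exp (1 / 2) ^ 2 = exp 1 := by rw [← exp_nat_mul]; norm_num
      nlinarith [exp_one_lt_d9, exp_pos (1 / 2)]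
    rw [hδ]
    nlinarith [exp_pos (-c ^ 2 / 2)]
  · refine (gm_tail_neg _ hu).trans (ENNReal.ofReal_le_ofReal ?_)
    have h6 : 0.6 ≤ c := by nlinarith
    have e : c * (1 / (2 * c)) = 1 / 2 := by field_simp
    have h5 : c ^ 2 ≤ 1 / 2 := by nlinarith
    have h7 : 1 / (2 * c) - c ≤ 0.2 := by nlinarith
    have := add_one_le_exp (-c ^ 2 / 2)
    rw [hδ]
    linarith

lemma gm_law {n : ℕ} (v : Fin n → NNReal) (w : Fin n → ℝ)
    (h : ∑ i, w i ^ 2 * v i = 1) :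
    (Measure.pi (fun i => gaussianReal 0 (v i))).map (fun x => ∑ i, w i * x i)
      = gaussianReal 0 1 := by
  have h1 : (Measure.pi (fun i => gaussianReal 0 (v i))).map (fun x i => w i * x i)
      = Measure.pi (fun i => (gaussianReal 0 (v i)).map (fun x => w i * x)) := by
    have : ∀ i, IsProbabilityMeasure ((gaussianReal 0 (v i)).map (fun x => w i * x)) :=
      fun i => Measure.isProbabilityMeasure_map (by fun_prop)
    exact Measure.pi_map_pi (fun i => by fun_prop)
  have h2 : (fun x : Fin n → ℝ => ∑ i, w i * x i)
      = (fun p : Fin n → ℝ => ∑ i, p i) ∘ (fun x i => w i * x i) := rfl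
  rw [h2, ← Measure.map_map (by fun_prop) (by fun_prop), h1]
  have : ∀ i, (gaussianReal 0 (v i)).map (fun x => w i * x)
    = gaussianReal 0 (NNReal.mk (w i ^ 2) (sq_nonneg _) * v i) := fun i => by
      rw [gaussianReal_map_const_mul, mul_zero]
  simp_rw [this]
  have : IsProbabilityMeasure ((Measure.pi fun i => gaussianReal 0 (NNReal.mk (w i ^ 2) (sq_nonneg _) * v i)).map
      (fun p : Fin n → ℝ => ∑ i, p i)) := Measure.isProbabilityMeasure_map (by fun_prop)
  apply Measure.ext_of_charFun
  rw [charFun_map_sum_pi_eq_prod]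
  ext t
  simp only [Finset.prod_apply, charFun_gaussianReal]
  rw [← Complex.exp_sum]
  congr 1
  have h' : (∑ i, (w i : ℂ) ^ 2 * (v i : ℂ)) = 1 := by exact_mod_cast h
  simp only [Complex.ofReal_zero, mul_zero, zero_mul, zero_sub, NNReal.coe_mul, NNReal.coe_mk,
    NNReal.coe_one, Complex.ofReal_one, Complex.ofReal_mul, Complex.ofReal_pow]
  rw [Finset.sum_neg_distrib, ← Finset.sum_div, ← Finset.sum_mul, h']

lemma gm_pi_withDensity {n : ℕ} (μ : Fin n → Measure ℝ) [∀ i, IsProbabilityMeasure (μ i)]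
    (f : Fin n → ℝ → ENNReal) (hf : ∀ i, Measurable (f i))
    [∀ i, IsProbabilityMeasure ((μ i).withDensity (f i))] :
    Measure.pi (fun i => (μ i).withDensity (f i))
      = (Measure.pi μ).withDensity (fun x => ∏ i, f i (x i)) := by
  apply Measure.pi_eq
  intro s hs
  rw [withDensity_apply _ (MeasurableSet.univ_pi hs),
    ← lintegral_indicator (MeasurableSet.univ_pi hs)]
  have e : (Set.univ.pi s).indicator (fun x : Fin n → ℝ => ∏ i, f i (x i))
      = fun x => ∏ i, (s i).indicator (f i) (x i) := by
    ext x
    by_cases hx : x ∈ Set.univ.pi s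
    · rw [Set.indicator_of_mem hx]
      refine Finset.prod_congr rfl fun i _ => ?_
      rw [Set.indicator_of_mem (hx i (Set.mem_univ i))]
    · rw [Set.indicator_of_notMem hx]
      simp only [Set.mem_pi, Set.mem_univ, true_implies, not_forall] at hx
      obtain ⟨i, hi⟩ := hx
      exact (Finset.prod_eq_zero (Finset.mem_univ i) (Set.indicator_of_notMem hi _)).symm
  have hm : ∀ i, Measurable ((s i).indicator (f i)) := fun i => (hf i).indicator (hs i)
  rw [e, lintegral_prod_eq_prod_lintegral_of_indepFun Finset.univ
    (fun i (x : Fin n → ℝ) => (s i).indicator (f i) (x i))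
    (iIndepFun_pi (fun i => (hm i).aemeasurable))
    (fun i => (hm i).comp (measurable_pi_apply i))]
  refine Finset.prod_congr rfl fun i _ => ?_
  rw [(measurePreserving_eval μ i).lintegral_comp (hm i), lintegral_indicator (hs i),
    withDensity_apply _ (hs i)]

lemma gm_density (m m' : ℝ) (v : NNReal) (hv : v ≠ 0) :
    (gaussianReal m' v).withDensity
      (fun x => ENNReal.ofReal (exp (((x - m') ^ 2 - (x - m) ^ 2) / (2 * v))))
      = gaussianReal m v := by
  rw [gaussianReal_of_var_ne_zero _ hv, gaussianReal_of_var_ne_zero _ hv,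
    ← withDensity_mul _ (by fun_prop) (by fun_prop)]
  congr 1
  ext x
  simp only [Pi.mul_apply, gaussianPDF]
  rw [← ENNReal.ofReal_mul (gaussianPDFReal_nonneg _ _ _)]
  congr 1
  simp only [gaussianPDFReal]
  rw [mul_assoc, ← exp_add]
  congr 2
  ring

lemma gm_translate {n : ℕ} (v : Fin n → NNReal) (a : Fin n → ℝ) :
    (Measure.pi (fun i => gaussianReal 0 (v i))).map (fun x => a + x)
      = Measure.pi (fun i => gaussianReal (a i) (v i)) := by
  have : ∀ i, IsProbabilityMeasure ((gaussianReal 0 (v i)).map (fun x => a i + x)) :=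
      fun i => Measure.isProbabilityMeasure_map (by fun_prop)
  have h := Measure.pi_map_pi (μ := fun i => gaussianReal 0 (v i)) (f := fun i x => a i + x)
    (fun i => by fun_prop)
  simp only [gaussianReal_map_const_add, zero_add] at h
  exact h

lemma gm_main {n : ℕ} (v : Fin n → NNReal) (hv : ∀ i, v i ≠ 0) (a a' : Fin n → ℝ) (ε : ℝ)
    (s : Set (Fin n → ℝ)) (hs : MeasurableSet s) :
    Measure.pi (fun i => gaussianReal (a i) (v i)) s
      ≤ ENNReal.ofReal (exp ε) * Measure.pi (fun i => gaussianReal (a' i) (v i)) s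
        + Measure.pi (fun i => gaussianReal (a i) (v i))
          {x | ε < ∑ i, ((x i - a' i) ^ 2 - (x i - a i) ^ 2) / (2 * v i)} := by
  set B : Set (Fin n → ℝ) := {x | ε < ∑ i, ((x i - a' i) ^ 2 - (x i - a i) ^ 2) / (2 * v i)}
    with hB
  have hBm : MeasurableSet B := measurableSet_lt (by fun_prop) (by fun_prop)
  have hd : Measure.pi (fun i => gaussianReal (a i) (v i))
      = (Measure.pi (fun i => gaussianReal (a' i) (v i))).withDensity
        (fun x => ENNReal.ofReal
          (exp (∑ i, ((x i - a' i) ^ 2 - (x i - a i) ^ 2) / (2 * v i)))) := by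
    have h0 := fun i => gm_density (a i) (a' i) (v i) (hv i)
    have : ∀ i, IsProbabilityMeasure ((gaussianReal (a' i) (v i)).withDensity
      (fun x => ENNReal.ofReal (exp (((x - a' i) ^ 2 - (x - a i) ^ 2) / (2 * v i))))) := by
      intro i
      rw [h0 i]
      infer_instance
    have h := gm_pi_withDensity (fun i => gaussianReal (a' i) (v i))
      (fun i x => ENNReal.ofReal (exp (((x - a' i) ^ 2 - (x - a i) ^ 2) / (2 * v i))))
      (fun i => by fun_prop)
    simp only [h0] at h
    rw [h]
    congr 1
    ext x
    rw [exp_sum, ENNReal.ofReal_prod_of_nonneg (fun i _ => exp_nonneg _)]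
  have hsub : s ⊆ (s \ B) ∪ B := by
    intro x hx
    by_cases h : x ∈ B
    · exact Or.inr h
    · exact Or.inl ⟨hx, h⟩
  refine (measure_mono hsub).trans ((measure_union_le _ _).trans (add_le_add ?_ le_rfl))
  rw [hd, withDensity_apply _ (hs.diff hBm)]
  calc _ ≤ ∫⁻ x in s \ B, ENNReal.ofReal (exp ε)
          ∂(Measure.pi (fun i => gaussianReal (a' i) (v i))) := by
        apply setLIntegral_mono (by fun_prop)
        intro x hx
        apply ENNReal.ofReal_le_ofReal
        apply exp_le_exp.2
        exact not_lt.1 hx.2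
    _ ≤ _ := by
        rw [setLIntegral_const]
        gcongr
        exact Set.sdiff_subset


/-- Multivariate Gaussian mechanism with per-coordinate noise levels: on inputs that are
adjacent in the `L₂` sense (distance at most `Δ`), the translated product-Gaussian output
distributions are `(ε, δ)`-indistinguishable. -/
theorem gaussian_mechanism_multivariate
    (n : ℕ) (hn : 1 ≤ n)
    (ε δ Δ : ℝ) (hε : ε ∈ Set.Ioo (0 : ℝ) 1) (hδ : δ ∈ Set.Ioo (0 : ℝ) 1)
    (hΔ : 0 ≤ Δ)
    (σ : Fin n → ℝ) (hσ : ∀ ℓ, 0 < σ ℓ)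
    (hcal : ∀ ℓ, σ ℓ ≥ Δ * Real.sqrt (2 * Real.log (1.25 / δ)) / ε)
    (a a' : Fin n → ℝ)
    (hadj : Real.sqrt (∑ ℓ, (a ℓ - a' ℓ) ^ 2) ≤ Δ)
    (s : Set (Fin n → ℝ)) (hs : MeasurableSet s) :
    Measure.map (fun x => a + x)
        (Measure.pi (fun ℓ => gaussianReal 0 ((σ ℓ) ^ 2).toNNReal)) s
      ≤ ENNReal.ofReal (Real.exp ε) *
          Measure.map (fun x => a' + x)
            (Measure.pi (fun ℓ => gaussianReal 0 ((σ ℓ) ^ 2).toNNReal)) s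
        + ENNReal.ofReal δ := by
  obtain ⟨hε0, hε1⟩ := hε
  obtain ⟨hδ0, hδ1⟩ := hδ
  set v : Fin n → NNReal := fun ℓ => ((σ ℓ) ^ 2).toNNReal with hv
  have hvc : ∀ i, (v i : ℝ) = σ i ^ 2 := fun i => Real.coe_toNNReal _ (sq_nonneg _)
  have hv0 : ∀ i, v i ≠ 0 := by
    intro i h
    have h1 := hvc i
    rw [h, NNReal.coe_zero] at h1
    exact (pow_pos (hσ i) 2).ne h1
  have hsum0 : 0 ≤ ∑ ℓ, (a ℓ - a' ℓ) ^ 2 := Finset.sum_nonneg fun i _ => sq_nonneg _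
  by_cases haa : a = a'
  · subst haa
    refine le_trans ?_ le_self_add
    refine le_mul_of_one_le_left zero_le ?_
    rw [ENNReal.one_le_ofReal]
    exact one_le_exp hε0.le
  have hsum : 0 < ∑ ℓ, (a ℓ - a' ℓ) ^ 2 := by
    refine lt_of_le_of_ne hsum0 fun h => haa ?_
    have h1 := (Finset.sum_eq_zero_iff_of_nonneg (fun i _ => sq_nonneg (a i - a' i))).1 h.symm
    ext i
    have := h1 i (Finset.mem_univ i)
    have := pow_eq_zero_iff (two_ne_zero) |>.1 this
    linarith
  have hΔ0 : 0 < Δ := lt_of_lt_of_le (Real.sqrt_pos.2 hsum) hadj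
  have hsumΔ : ∑ ℓ, (a ℓ - a' ℓ) ^ 2 ≤ Δ ^ 2 := (Real.sqrt_le_left hΔ).1 hadj
  have hlog : 0.2 ≤ Real.log (1.25 / δ) := by
    have h1 := Real.one_sub_inv_le_log_of_pos (x := 1.25 / δ) (by positivity)
    have h2 : (1.25 / δ)⁻¹ = 0.8 * δ := by rw [inv_div]; ring
    rw [h2] at h1
    linarith
  set c := Real.sqrt (2 * Real.log (1.25 / δ)) with hc
  have hc2 : c ^ 2 = 2 * Real.log (1.25 / δ) := Real.sq_sqrt (by linarith)
  have hc0 : 0 < c := Real.sqrt_pos.2 (by linarith)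
  have hδc : δ = 1.25 * exp (-c ^ 2 / 2) := by
    have : -c ^ 2 / 2 = -Real.log (1.25 / δ) := by rw [hc2]; ring
    rw [this, exp_neg, exp_log (by positivity)]
    field_simp
  -- the normalized distance
  set T := ∑ i, (a i - a' i) ^ 2 / σ i ^ 2 with hT
  have hT0 : 0 < T := by
    obtain ⟨i, -, hi⟩ := Finset.exists_lt_of_sum_lt (s := Finset.univ) (f := fun _ : Fin n => (0:ℝ))
      (g := fun ℓ => (a ℓ - a' ℓ) ^ 2) (by simpa using hsum)
    exact Finset.sum_pos' (fun j _ => by positivity)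
      ⟨i, Finset.mem_univ i, div_pos hi (pow_pos (hσ i) 2)⟩
  have hTle : T ≤ (ε / c) ^ 2 := by
    have h1 : ∀ i, (a i - a' i) ^ 2 / σ i ^ 2 ≤ (a i - a' i) ^ 2 * (ε / (Δ * c)) ^ 2 := by
      intro i
      have h2 : (Δ * c / ε) ^ 2 ≤ σ i ^ 2 := pow_le_pow_left₀ (by positivity) (hcal i) 2
      have h3 : (ε / (Δ * c)) ^ 2 = ((Δ * c / ε) ^ 2)⁻¹ := by
        rw [← inv_pow, inv_div]
      rw [h3, div_eq_mul_inv]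
      gcongr
    calc T ≤ ∑ i, (a i - a' i) ^ 2 * (ε / (Δ * c)) ^ 2 := Finset.sum_le_sum fun i _ => h1 i
      _ = (∑ i, (a i - a' i) ^ 2) * (ε / (Δ * c)) ^ 2 := by rw [Finset.sum_mul]
      _ ≤ Δ ^ 2 * (ε / (Δ * c)) ^ 2 := by gcongr
      _ = (ε / c) ^ 2 := by field_simp
  set t := Real.sqrt T with ht
  have ht0 : 0 < t := Real.sqrt_pos.2 hT0
  have ht2 : t ^ 2 = T := Real.sq_sqrt hT0.le
  have htle : t ≤ ε / c := (Real.sqrt_le_left (by positivity)).2 hTle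
  rw [gm_translate, gm_translate]
  refine (gm_main v hv0 a a' ε s hs).trans (add_le_add le_rfl ?_)
  refine le_trans ?_ (gm_tail c δ hc0 (by linarith) hδc)
  rw [← gm_translate v a, Measure.map_apply (by fun_prop)
    (measurableSet_lt (by fun_prop) (by fun_prop)),
    ← gm_law v (fun i => (a i - a' i) / σ i ^ 2 / t) ?_,
    Measure.map_apply (by fun_prop) measurableSet_Ioi]
  · apply measure_mono
    intro x hx
    simp only [Set.mem_preimage, Set.mem_ofPred_eq, Set.mem_Ioi, Pi.add_apply, hvc] at hx ⊢
    set S := ∑ i, (a i - a' i) / σ i ^ 2 / t * x i with hS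
    have e : ∑ i, ((a i + x i - a' i) ^ 2 - (a i + x i - a i) ^ 2) / (2 * σ i ^ 2)
        = t * S + t ^ 2 / 2 := by
      rw [ht2, hT, hS, Finset.mul_sum, Finset.sum_div, ← Finset.sum_add_distrib]
      refine Finset.sum_congr rfl fun i _ => ?_
      have := (hσ i).ne'
      field_simp
      ring
    rw [e] at hx
    have h1 : t * c ≤ ε := (le_div_iff₀ hc0).1 htle
    have h2 : t ≤ 1 / c := htle.trans (by gcongr)
    have h3 : 1 / (2 * c) = 1 / c / 2 := by field_simp
    rw [h3]
    nlinarith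
  · simp only [hvc]
    have : ∀ i, ((a i - a' i) / σ i ^ 2 / t) ^ 2 * σ i ^ 2
        = (a i - a' i) ^ 2 / σ i ^ 2 / T := by
      intro i
      have := (hσ i).ne'
      rw [← ht2]
      field_simp
    simp_rw [this]
    rw [← Finset.sum_div, ← hT, div_self hT0.ne']
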